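/- For q ≥ 1, d ≥ 1 and complex z, w with Re(z) > (d/2)(q-1) and Re(w) > (d/2)(q-1), the beta function of the cone of q×q real symmetric positive definite matrices (case d = 1) satisfies B_Ω(z,w) = Γ_Ω(z)Γ_Ω(w)/Γ_Ω(z+w), where B_Ω(z,w) = ∫_{0<x<I} det(x)^{z-(q+1)/2} det(I-x)^{w-(q+1)/2} dx. -/

import Mathlib

open MeasureTheory Matrix Complex

variable (q : ℕ)

/-- Index set for the independent entries of a symmetric `q×q` matrix. -/
abbrev SymIdx (q : ℕ) := {p : Fin q × Fin q // p.1 ≤ p.2}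

/-- The symmetric matrix determined by its upper-triangular entries. -/
def symOfFun (f : SymIdx q → ℝ) : Matrix (Fin q) (Fin q) ℝ := fun i j =>
  if h : i ≤ j then f ⟨(i, j), h⟩ else f ⟨(j, i), (not_le.mp h).le⟩

instance : MeasurableSpace (Matrix (Fin q) (Fin q) ℝ) :=
  inferInstanceAs (MeasurableSpace ((Fin q) → (Fin q) → ℝ))

/-- Lebesgue measure on the space of real symmetric `q×q` matrices, realized as the
pushforward of Lebesgue measure on the coordinates. -/
noncomputable def symMeasure : Measure (Matrix (Fin q) (Fin q) ℝ) :=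
  Measure.map (symOfFun q) volume

/-- The gamma function of the cone `Ω` of positive definite real symmetric matrices,
`Γ_Ω(z) = ∫_Ω e^{-tr x} det(x)^{z-(q+1)/2} dx`. -/
noncomputable def GammaOmega (z : ℂ) : ℂ :=
  ∫ x in {x : Matrix (Fin q) (Fin q) ℝ | x.PosDef},
    Complex.exp (-(x.trace : ℂ)) * ((x.det : ℝ) : ℂ) ^ (z - ((q : ℂ) + 1) / 2) ∂(symMeasure q)

/-- The beta function of the cone,
`B_Ω(z,w) = ∫_{0<x<I} det(x)^{z-(q+1)/2} det(I-x)^{w-(q+1)/2} dx`. -/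
noncomputable def BetaOmega (z w : ℂ) : ℂ :=
  ∫ x in {x : Matrix (Fin q) (Fin q) ℝ | x.PosDef ∧ (1 - x).PosDef},
    ((x.det : ℝ) : ℂ) ^ (z - ((q : ℂ) + 1) / 2) *
      (((1 - x).det : ℝ) : ℂ) ^ (w - ((q : ℂ) + 1) / 2) ∂(symMeasure q)

/-!
Substituting `x = A y Aᵀ` in `∫ det(x)^s det(AAᵀ - x)^t dx` shows that the convolution of the two
integrands of `Γ_Ω(z)` and `Γ_Ω(w)` is `B_Ω(z,w)` times the integrand of `Γ_Ω(z+w)`; integrating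
gives `Γ_Ω(z) Γ_Ω(w) = B_Ω(z,w) Γ_Ω(z+w)`. The Jacobian of `x ↦ A x Aᵀ` is `det(A)^(q+1)`, because
its determinant is multiplicative in `A`, hence trivial on transvections, and is explicit on
diagonal matrices.

Convergence and nonvanishing of `Γ_Ω` come from Gindikin's induction on `q`: in the coordinates of a
border `(b, c)` of a matrix `A` of size `q`, with `c` replaced by the Schur complement
`t = c - bᵀA⁻¹b`, the integral over `t` is a classical gamma function, and the one over `b` is a
Gaussian integral, which contributes a constant times `det(A)^(1/2)`.
-/

section ChangeOfVariables

variable {E F : Type*} [NormedAddCommGroup E] [NormedSpace ℝ E] [FiniteDimensional ℝ E]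
  [MeasurableSpace E] [BorelSpace E] [NormedAddCommGroup F]

theorem measurableEmbedding_of_linearMap_det_ne_zero {L : E →ₗ[ℝ] E}
    (hL : LinearMap.det L ≠ 0) : MeasurableEmbedding L :=
  (L.equivOfDetNeZero hL).toContinuousLinearEquiv.toHomeomorph.measurableEmbedding

variable (μ : Measure E) [μ.IsAddHaarMeasure]

theorem integral_comp_linearMap [NormedSpace ℝ F] {L : E →ₗ[ℝ] E}
    (hL : LinearMap.det L ≠ 0) (g : E → F) :
    ∫ x, g (L x) ∂μ = |LinearMap.det L|⁻¹ • ∫ x, g x ∂μ := by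
  rw [← (measurableEmbedding_of_linearMap_det_ne_zero hL).integral_map,
    Measure.map_linearMap_addHaar_eq_smul_addHaar μ hL, integral_smul_measure, abs_inv,
    ENNReal.toReal_ofReal (by positivity)]

theorem integrable_comp_linearMap {L : E →ₗ[ℝ] E} (hL : LinearMap.det L ≠ 0)
    {g : E → F} (hg : Integrable g μ) : Integrable (fun x ↦ g (L x)) μ := by
  refine (measurableEmbedding_of_linearMap_det_ne_zero hL).integrable_map_iff.mp ?_
  rw [Measure.map_linearMap_addHaar_eq_smul_addHaar μ hL]
  exact hg.smul_measure ENNReal.ofReal_ne_top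

end ChangeOfVariables

section Matrices

variable {n : Type*} [Fintype n]

theorem isSymm_mul_mul_transpose {m R : Type*} [CommSemiring R] {x : Matrix n n R}
    (hx : x.IsSymm) (A : Matrix m n R) : (A * x * Aᵀ).IsSymm := by
  simp [IsSymm, hx.eq, Matrix.mul_assoc]

variable [DecidableEq n]

theorem posDef_mul_mul_transpose_iff {A x : Matrix n n ℝ} (hA : IsUnit A) :
    (A * x * Aᵀ).PosDef ↔ x.PosDef := by
  simpa only [star_eq_conjTranspose, conjTranspose_eq_transpose_of_trivial] using
    IsUnit.posDef_star_right_conjugate_iff (x := x) hA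

theorem posDef_mul_transpose {A : Matrix n n ℝ} (hA : IsUnit A) : (A * Aᵀ).PosDef := by
  simpa using (posDef_mul_mul_transpose_iff (x := 1) hA).mpr PosDef.one

open scoped MatrixOrder Matrix.Norms.L2Operator in
theorem exists_isUnit_eq_mul_transpose {x : Matrix n n ℝ} (hx : x.PosDef) :
    ∃ A : Matrix n n ℝ, IsUnit A ∧ x = A * Aᵀ := by
  obtain ⟨B, hB, hxB⟩ := CStarAlgebra.isStrictlyPositive_iff_eq_star_mul_self.mp
    hx.isStrictlyPositive
  exact ⟨Bᵀ, (isUnit_transpose B).mpr hB, by simpa [star_eq_conjTranspose] using hxB⟩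

theorem isClosed_setOf_posSemidef {n : Type*} [Finite n] :
    IsClosed {x : Matrix n n ℝ | x.PosSemidef} := by
  have := Fintype.ofFinite n
  have : {x : Matrix n n ℝ | x.PosSemidef} =
      {x | xᴴ = x} ∩ ⋂ v : n → ℝ, {x | 0 ≤ star v ⬝ᵥ (x *ᵥ v)} := by
    ext x
    simp [posSemidef_iff_dotProduct_mulVec, IsHermitian]
  rw [this]
  exact (isClosed_eq (by fun_prop) continuous_id).inter <|
    isClosed_iInter fun v ↦ isClosed_le continuous_const
      (continuous_const.dotProduct (continuous_id.matrix_mulVec continuous_const))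

theorem measurableSet_setOf_posDef {n : Type*} [Finite n] [MeasurableSpace (Matrix n n ℝ)]
    [BorelSpace (Matrix n n ℝ)] : MeasurableSet {x : Matrix n n ℝ | x.PosDef} := by
  classical
  have := Fintype.ofFinite n
  have : {x : Matrix n n ℝ | x.PosDef} = {x | x.PosSemidef} ∩ {x | x.det ≠ 0} := by
    ext x
    exact ⟨fun h ↦ ⟨h.posSemidef, h.det_pos.ne'⟩, fun h ↦ h.1.posDef_iff_det_ne_zero.mpr h.2⟩
  rw [this]
  exact isClosed_setOf_posSemidef.measurableSet.inter
    (isOpen_ne_fun continuous_id.matrix_det continuous_const).measurableSet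

/-- Rescaling the `i`-th coordinate by `2` conjugates `transvection i j c` into
`transvection i j (2 * c)`, its own square. -/
theorem map_transvection_eq_one {R M : Type*} [CommRing R] [CommMonoid M]
    (h2 : IsUnit (2 : R)) (χ : Matrix n n R →* M) {i j : n} (hij : i ≠ j) (c : R) :
    χ (transvection i j c) = 1 := by
  set T := transvection i j c
  set D : Matrix n n R := diagonal fun k ↦ if k = i then 2 else 1
  have hDT : D * T = T * T * D := by
    rw [transvection_mul_transvection_same i j hij, ← two_mul]
    simp only [T, transvection, mul_add, add_mul, mul_one, one_mul, add_right_inj]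
    ext k l
    simp only [D, diagonal_mul, mul_diagonal, single_apply]
    split_ifs <;> grind
  have hD : IsUnit D := by
    rw [isUnit_diagonal, Pi.isUnit_iff]
    intro k
    by_cases hk : k = i <;> simp [hk, h2]
  have hT : IsUnit T := by
    rw [isUnit_iff_isUnit_det, det_transvection_of_ne i j hij]
    exact isUnit_one
  have hχ : χ T * χ (T * D) = 1 * χ (T * D) := by
    rw [← map_mul, ← mul_assoc, ← hDT, one_mul, map_mul, map_mul, mul_comm]
  exact ((hT.mul hD).map χ).mul_right_cancel hχ

end Matrices

section Gaussian

variable {n : Type*} [Fintype n]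

theorem exp_neg_dotProduct_self (b : n → ℝ) :
    Real.exp (-(b ⬝ᵥ b)) = ∏ i, Real.exp (-1 * b i ^ 2) := by
  rw [← Real.exp_sum]
  simp [dotProduct, sq]

theorem integrable_exp_neg_dotProduct_self :
    Integrable fun b : n → ℝ ↦ Real.exp (-(b ⬝ᵥ b)) := by
  simp_rw [exp_neg_dotProduct_self]
  exact Integrable.fintype_prod fun _ ↦ integrable_exp_neg_mul_sq one_pos

theorem integral_exp_neg_dotProduct_self :
    ∫ b : n → ℝ, Real.exp (-(b ⬝ᵥ b)) = √Real.pi ^ Fintype.card n := by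
  simp_rw [exp_neg_dotProduct_self]
  rw [integral_fintype_prod_volume_eq_pow fun x : ℝ ↦ Real.exp (-1 * x ^ 2), integral_gaussian,
    div_one]

variable {P : Matrix n n ℝ}

theorem exists_exp_neg_dotProduct_mulVec_eq_comp_linearMap [DecidableEq n] (hP : P.PosDef) :
    ∃ L : (n → ℝ) →ₗ[ℝ] n → ℝ, LinearMap.det L ≠ 0 ∧ |LinearMap.det L| = √P.det ∧
      ∀ b, Real.exp (-(b ⬝ᵥ P *ᵥ b)) = Real.exp (-(L b ⬝ᵥ L b)) := by
  obtain ⟨A, hA, rfl⟩ := exists_isUnit_eq_mul_transpose hP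
  refine ⟨toLin' Aᵀ, ?_, ?_, fun b ↦ ?_⟩
  · rw [LinearMap.det_toLin', det_transpose]
    exact ((isUnit_iff_isUnit_det A).mp hA).ne_zero
  · rw [LinearMap.det_toLin', det_transpose, det_mul, det_transpose, Real.sqrt_mul_self_eq_abs]
  · rw [toLin'_apply, ← mulVec_mulVec, dotProduct_mulVec, ← mulVec_transpose]

theorem integrable_exp_neg_dotProduct_mulVec (hP : P.PosDef) :
    Integrable fun b : n → ℝ ↦ Real.exp (-(b ⬝ᵥ P *ᵥ b)) := by
  classical
  obtain ⟨L, hL, -, hPL⟩ := exists_exp_neg_dotProduct_mulVec_eq_comp_linearMap hP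
  simp_rw [hPL]
  exact integrable_comp_linearMap volume hL integrable_exp_neg_dotProduct_self

theorem integral_exp_neg_dotProduct_mulVec [DecidableEq n] (hP : P.PosDef) :
    ∫ b : n → ℝ, Real.exp (-(b ⬝ᵥ P *ᵥ b)) = √Real.pi ^ Fintype.card n / √P.det := by
  obtain ⟨L, hL, hdet, hPL⟩ := exists_exp_neg_dotProduct_mulVec_eq_comp_linearMap hP
  simp_rw [hPL]
  rw [integral_comp_linearMap volume hL (fun b ↦ Real.exp (-(b ⬝ᵥ b))), hdet,
    integral_exp_neg_dotProduct_self, smul_eq_mul, div_eq_inv_mul]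

end Gaussian

section PosDefPow

variable {n : Type*} [Fintype n] [DecidableEq n] {s t : ℂ} {x y : Matrix n n ℝ}

/-- The power function `x ↦ det(x)^s` of the cone of positive definite matrices, extended by zero
to all matrices, so that integrals over the cone become integrals over the whole space. -/
noncomputable def posDefPow (s : ℂ) : Matrix n n ℝ → ℂ :=
  {x : Matrix n n ℝ | x.PosDef}.indicator fun x ↦ (x.det : ℂ) ^ s

theorem posDefPow_of_posDef (hx : x.PosDef) : posDefPow s x = (x.det : ℂ) ^ s :=
  Set.indicator_of_mem (s := {x : Matrix n n ℝ | x.PosDef}) hx _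

theorem posDefPow_of_not_posDef (hx : ¬x.PosDef) : posDefPow s x = 0 :=
  Set.indicator_of_notMem (s := {x : Matrix n n ℝ | x.PosDef}) hx _

theorem measurable_posDefPow [MeasurableSpace (Matrix n n ℝ)] [BorelSpace (Matrix n n ℝ)] :
    Measurable (posDefPow s : Matrix n n ℝ → ℂ) := by
  have hdet : Measurable fun x : Matrix n n ℝ ↦ x.det := continuous_id.matrix_det.measurable
  exact Measurable.indicator (by fun_prop) measurableSet_setOf_posDef

theorem posDefPow_add : posDefPow (s + t) x = posDefPow s x * posDefPow t x := by
  by_cases hx : x.PosDef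
  · simp only [posDefPow_of_posDef hx]
    exact cpow_add _ _ (ofReal_ne_zero.mpr hx.det_pos.ne')
  · simp only [posDefPow_of_not_posDef hx, mul_zero]

theorem posDefPow_mul_posDefPow_eq_zero (hxy : ¬(x + y).PosDef) :
    posDefPow s x * posDefPow t y = 0 := by
  by_contra h
  refine hxy (PosDef.add ?_ ?_)
  · exact not_not.mp fun hx ↦ h (by rw [posDefPow_of_not_posDef hx, zero_mul])
  · exact not_not.mp fun hy ↦ h (by rw [posDefPow_of_not_posDef hy, mul_zero])

theorem posDefPow_mul_mul_transpose {A : Matrix n n ℝ} (hA : IsUnit A) :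
    posDefPow s (A * x * Aᵀ) = posDefPow s (A * Aᵀ) * posDefPow s x := by
  have hAA := posDef_mul_transpose hA
  by_cases hx : x.PosDef
  · have hdet : (A * x * Aᵀ).det = (A * Aᵀ).det * x.det := by
      simp only [det_mul]
      ring
    rw [posDefPow_of_posDef ((posDef_mul_mul_transpose_iff hA).mpr hx), posDefPow_of_posDef hAA,
      posDefPow_of_posDef hx, hdet, ofReal_mul,
      mul_cpow_ofReal_nonneg hAA.det_pos.le hx.det_pos.le]
  · rw [posDefPow_of_not_posDef (mt (posDef_mul_mul_transpose_iff hA).mp hx),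
      posDefPow_of_not_posDef hx, mul_zero]

theorem posDefPow_half (hx : x.PosDef) : posDefPow (1 / 2) x = √x.det := by
  rw [posDefPow_of_posDef hx, Real.sqrt_eq_rpow, ofReal_cpow hx.det_pos.le]
  norm_num

theorem posDefPow_natCast_div_two {A : Matrix n n ℝ} (hA : IsUnit A) (k : ℕ) :
    posDefPow (k / 2) (A * Aᵀ) = ((|A.det| : ℝ) : ℂ) ^ k := by
  have hAA := posDef_mul_transpose hA
  have hdet : √(A * Aᵀ).det = |A.det| := by
    rw [det_mul, det_transpose, Real.sqrt_mul_self_eq_abs]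
  rw [← hdet, ← posDefPow_half hAA, posDefPow_of_posDef hAA, posDefPow_of_posDef hAA,
    ← cpow_nat_mul, mul_one_div]

end PosDefPow

section SymmetricMatrices

instance : BorelSpace (Matrix (Fin q) (Fin q) ℝ) :=
  inferInstanceAs (BorelSpace (Fin q → Fin q → ℝ))

variable {q}

/-- The linear map underlying `symOfFun`. -/
def symLin : (SymIdx q → ℝ) →ₗ[ℝ] Matrix (Fin q) (Fin q) ℝ where
  toFun := symOfFun q
  map_add' f g := by
    ext i j
    simp only [symOfFun, Matrix.add_apply]
    split_ifs <;> rfl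
  map_smul' c f := by
    ext i j
    simp only [symOfFun, Matrix.smul_apply]
    split_ifs <;> rfl

/-- The upper triangular entries of a matrix: a left inverse of `symOfFun`, and its inverse on
symmetric matrices. -/
def symCoord : Matrix (Fin q) (Fin q) ℝ →ₗ[ℝ] SymIdx q → ℝ where
  toFun x p := x p.1.1 p.1.2
  map_add' _ _ := rfl
  map_smul' _ _ := rfl

theorem symOfFun_apply (f : SymIdx q → ℝ) (p : SymIdx q) : symOfFun q f p.1.1 p.1.2 = f p :=
  dif_pos p.2

theorem symCoord_apply (x : Matrix (Fin q) (Fin q) ℝ) (p : SymIdx q) :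
    symCoord x p = x p.1.1 p.1.2 :=
  rfl

theorem symCoord_symOfFun (f : SymIdx q → ℝ) : symCoord (symOfFun q f) = f :=
  funext fun p ↦ symOfFun_apply f p

theorem isSymm_symOfFun (f : SymIdx q → ℝ) : (symOfFun q f).IsSymm := by
  ext i j
  rcases lt_trichotomy i j with h | rfl | h
  · simp [symOfFun, h.le, h.not_ge]
  · rfl
  · simp [symOfFun, h.le, h.not_ge]

theorem symOfFun_symCoord {x : Matrix (Fin q) (Fin q) ℝ} (hx : x.IsSymm) :
    symOfFun q (symCoord x) = x := by
  ext i j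
  by_cases h : i ≤ j
  · exact symOfFun_apply (symCoord x) ⟨(i, j), h⟩
  · rw [← (isSymm_symOfFun _).apply, ← hx.apply]
    exact symOfFun_apply (symCoord x) ⟨(j, i), (not_le.mp h).le⟩

theorem symOfFun_sub (f g : SymIdx q → ℝ) : symOfFun q (f - g) = symOfFun q f - symOfFun q g :=
  map_sub symLin f g

theorem isClosedEmbedding_symOfFun : Topology.IsClosedEmbedding (symOfFun q) :=
  LinearMap.isClosedEmbedding_of_injective (f := symLin)
    (LinearMap.ker_eq_bot.mpr (Function.LeftInverse.injective symCoord_symOfFun))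

theorem integral_symMeasure (g : Matrix (Fin q) (Fin q) ℝ → ℂ) :
    ∫ x, g x ∂symMeasure q = ∫ f, g (symOfFun q f) :=
  isClosedEmbedding_symOfFun.measurableEmbedding.integral_map g

/-- The linear action `x ↦ A x Aᵀ` of a matrix `A` on symmetric matrices, in coordinates. -/
def symCongr : Matrix (Fin q) (Fin q) ℝ →* Module.End ℝ (SymIdx q → ℝ) where
  toFun A := symCoord ∘ₗ LinearMap.mulRight ℝ Aᵀ ∘ₗ LinearMap.mulLeft ℝ A ∘ₗ symLin
  map_one' := LinearMap.ext fun f ↦ by simp [symLin, symCoord_symOfFun]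
  map_mul' A B := LinearMap.ext fun f ↦ by
    have hB := symOfFun_symCoord (isSymm_mul_mul_transpose (isSymm_symOfFun f) B)
    simp only [Matrix.mul_assoc] at hB
    simp [symLin, hB, Matrix.mul_assoc]

theorem symOfFun_symCongr (A : Matrix (Fin q) (Fin q) ℝ) (f : SymIdx q → ℝ) :
    symOfFun q (symCongr A f) = A * symOfFun q f * Aᵀ :=
  symOfFun_symCoord (isSymm_mul_mul_transpose (isSymm_symOfFun f) A)

theorem prod_symIdx {M : Type*} [CommMonoid M] (d : Fin q → M) :
    ∏ p : SymIdx q, d p.1.1 * d p.1.2 = (∏ i, d i) ^ (q + 1) := by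
  calc ∏ p : SymIdx q, d p.1.1 * d p.1.2
      = ∏ i, ∏ j, if i ≤ j then d i * d j else 1 := by
        rw [← Fintype.prod_prod_type', ← Finset.prod_filter]
        exact (Finset.prod_subtype {p : Fin q × Fin q | p.1 ≤ p.2} (by simp)
          fun p ↦ d p.1 * d p.2).symm
    _ = (∏ i, ∏ j, if i ≤ j then d i else 1) * ∏ j, ∏ i, if i ≤ j then d j else 1 := by
        rw [Finset.prod_comm (f := fun j i ↦ if i ≤ j then d j else 1)]
        simp only [← Finset.prod_mul_distrib, ite_mul_ite, mul_one]
    _ = ∏ i, d i ^ (q + 1) := by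
        rw [← Finset.prod_mul_distrib]
        refine Finset.prod_congr rfl fun i _ ↦ ?_
        rw [← Finset.prod_filter, ← Finset.prod_filter, Finset.prod_const, Finset.prod_const,
          ← pow_add, Finset.filter_le_eq_Ici, Finset.filter_ge_eq_Iic, Fin.card_Ici, Fin.card_Iic]
        congr 1
        omega
    _ = (∏ i, d i) ^ (q + 1) := Finset.prod_pow _ _ _

theorem det_symCongr_diagonal (d : Fin q → ℝ) :
    LinearMap.det (symCongr (diagonal d)) = (∏ i, d i) ^ (q + 1) := by
  have hdiag : symCongr (diagonal d) = toLin' (diagonal fun p : SymIdx q ↦ d p.1.1 * d p.1.2) := by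
    refine LinearMap.ext fun f ↦ funext fun p ↦ ?_
    change (diagonal d * symOfFun q f * (diagonal d)ᵀ) p.1.1 p.1.2 = _
    rw [diagonal_transpose, mul_diagonal, diagonal_mul, symOfFun_apply, toLin'_apply,
      mulVec_diagonal, mul_right_comm]
  rw [hdiag, LinearMap.det_toLin', det_diagonal, prod_symIdx]

theorem det_symCongr (A : Matrix (Fin q) (Fin q) ℝ) :
    LinearMap.det (symCongr A) = A.det ^ (q + 1) := by
  induction A using diagonal_transvection_induction with
  | hdiag d _ => rw [det_symCongr_diagonal, det_diagonal]
  | htransvec t =>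
    rw [TransvectionStruct.det, one_pow]
    exact map_transvection_eq_one (by norm_num) (LinearMap.det.comp symCongr) t.hij t.c
  | hmul A B hA hB => rw [map_mul, map_mul, hA, hB, det_mul, mul_pow]

end SymmetricMatrices

section GammaDensity

variable {n : Type*} [Fintype n] [DecidableEq n] {s : ℂ}

/-- The integrand `e^{-tr x} det(x)^s` of the gamma function of the cone, extended by zero outside
the positive definite matrices. -/
noncomputable def gammaDensity (s : ℂ) (x : Matrix n n ℝ) : ℂ :=
  cexp (-(x.trace : ℂ)) * posDefPow s x

theorem measurable_gammaDensity [MeasurableSpace (Matrix n n ℝ)] [BorelSpace (Matrix n n ℝ)] :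
    Measurable (gammaDensity s : Matrix n n ℝ → ℂ) := by
  have htrace : Measurable fun x : Matrix n n ℝ ↦ x.trace := continuous_id.matrix_trace.measurable
  have hpow := measurable_posDefPow (n := n) (s := s)
  unfold gammaDensity
  fun_prop

theorem gammaDensity_of_not_posDef {x : Matrix n n ℝ} (hx : ¬x.PosDef) : gammaDensity s x = 0 := by
  rw [gammaDensity, posDefPow_of_not_posDef hx, mul_zero]

theorem gammaDensity_submatrix_equiv {m : Type*} [Fintype m] [DecidableEq m] (e : m ≃ n)
    (x : Matrix n n ℝ) : gammaDensity s (x.submatrix e e) = gammaDensity s x := by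
  have htrace : (x.submatrix e e).trace = x.trace := e.sum_comp fun i ↦ x i i
  have hpos : (x.submatrix e e).PosDef ↔ x.PosDef :=
    ⟨fun h ↦ by simpa using h.submatrix e.symm.injective, fun h ↦ h.submatrix e.injective⟩
  by_cases hx : x.PosDef
  · rw [gammaDensity, gammaDensity, posDefPow_of_posDef hx, posDefPow_of_posDef (hpos.mpr hx),
      det_submatrix_equiv_self, htrace]
  · rw [gammaDensity_of_not_posDef hx, gammaDensity_of_not_posDef (mt hpos.mp hx)]

end GammaDensity

section Bordered

variable {n : Type*} [Fintype n] {A : Matrix n n ℝ} {b : n → ℝ} {c : ℝ}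

/-- The matrix obtained from `A` by adding `b` as last row and column and `c` as last diagonal
entry. -/
def bordered (A : Matrix n n ℝ) (b : n → ℝ) (c : ℝ) : Matrix (n ⊕ Fin 1) (n ⊕ Fin 1) ℝ :=
  fromBlocks A (replicateCol (Fin 1) b) (replicateCol (Fin 1) b)ᴴ (of fun _ _ ↦ c)

theorem trace_bordered : (bordered A b c).trace = A.trace + c := by
  simp [bordered, trace]

variable [DecidableEq n] {s : ℂ}

/-- The quadratic form of `A⁻¹`: the matrix `bordered A b c` has Schur complement
`c - invForm A b`. -/
noncomputable def invForm (A : Matrix n n ℝ) (b : n → ℝ) : ℝ :=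
  b ⬝ᵥ A⁻¹ *ᵥ b

theorem schurComplement_bordered : (of fun _ _ ↦ c) -
    (replicateCol (Fin 1) b)ᴴ * A⁻¹ * replicateCol (Fin 1) b =
      diagonal fun _ : Fin 1 ↦ c - invForm A b := by
  ext i j
  fin_cases i; fin_cases j
  simp [invForm, Matrix.mul_assoc, Matrix.mul_apply, dotProduct, mulVec]

theorem det_bordered (hA : IsUnit A) : (bordered A b c).det = A.det * (c - invForm A b) := by
  have := hA.invertible
  rw [bordered, det_fromBlocks₁₁, invOf_eq_nonsing_inv, schurComplement_bordered, det_diagonal,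
    Fin.prod_univ_one]

theorem posDef_bordered_iff : (bordered A b c).PosDef ↔ A.PosDef ∧ 0 < c - invForm A b := by
  constructor
  · intro h
    have hA : A.PosDef := h.submatrix Sum.inl_injective
    have hdet := h.det_pos
    rw [det_bordered hA.isUnit] at hdet
    exact ⟨hA, pos_of_mul_pos_right hdet hA.det_pos.le⟩
  · rintro ⟨hA, hc⟩
    have := hA.isUnit.invertible
    have hsemi : (bordered A b c).PosSemidef := by
      rw [bordered, hA.fromBlocks₁₁, schurComplement_bordered, posSemidef_diagonal_iff]
      exact fun _ ↦ hc.le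
    rw [hsemi.posDef_iff_det_ne_zero, det_bordered hA.isUnit]
    exact mul_ne_zero hA.det_pos.ne' hc.ne'

theorem gammaDensity_bordered (t : ℝ) :
    gammaDensity s (bordered A b (t + invForm A b)) =
      gammaDensity s A * (Real.exp (-invForm A b) : ℂ) *
        (Set.Ioi 0).indicator (fun t : ℝ ↦ (Real.exp (-t) : ℂ) * (t : ℂ) ^ s) t := by
  by_cases hA : A.PosDef
  swap
  · rw [gammaDensity_of_not_posDef hA, zero_mul, zero_mul,
      gammaDensity_of_not_posDef fun h ↦ hA (posDef_bordered_iff.mp h).1]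
  by_cases ht : t ∈ Set.Ioi 0
  · have hpos : (bordered A b (t + invForm A b)).PosDef :=
      posDef_bordered_iff.mpr ⟨hA, by simpa using ht⟩
    rw [gammaDensity, gammaDensity, posDefPow_of_posDef hA, posDefPow_of_posDef hpos,
      Set.indicator_of_mem ht, trace_bordered, det_bordered hA.isUnit, add_sub_cancel_right,
      ofReal_mul, mul_cpow_ofReal_nonneg hA.det_pos.le (le_of_lt ht)]
    push_cast
    rw [neg_add, neg_add, exp_add, exp_add]
    ring
  · rw [Set.indicator_of_notMem ht, mul_zero, gammaDensity_of_not_posDef]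
    exact fun h ↦ ht (by simpa using (posDef_bordered_iff.mp h).2)

theorem integrable_exp_neg_invForm (hA : A.PosDef) :
    Integrable fun b ↦ (Real.exp (-invForm A b) : ℂ) :=
  (integrable_exp_neg_dotProduct_mulVec hA.inv).ofReal

theorem gammaDensity_mul_integral_exp_neg_invForm :
    gammaDensity s A * (∫ b, Real.exp (-invForm A b) : ℝ) =
      √Real.pi ^ Fintype.card n * gammaDensity (s + 1 / 2) A := by
  by_cases hA : A.PosDef
  · have hint : ∫ b, Real.exp (-invForm A b) = √Real.pi ^ Fintype.card n * √A.det := by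
      unfold invForm
      rw [integral_exp_neg_dotProduct_mulVec hA.inv, det_nonsing_inv, Ring.inverse_eq_inv',
        Real.sqrt_inv, div_inv_eq_mul]
    rw [hint, gammaDensity, gammaDensity, posDefPow_add, posDefPow_half hA]
    push_cast
    ring
  · rw [gammaDensity_of_not_posDef hA, gammaDensity_of_not_posDef hA, zero_mul, mul_zero]

end Bordered

section SymBorder

variable {q}

/-- The matrix `bordered` as a symmetric matrix of size `q + 1`, all in coordinates. -/
def symBorder (x : ((SymIdx q → ℝ) × (Fin q → ℝ)) × ℝ) : SymIdx (q + 1) → ℝ :=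
  symCoord ((bordered (symOfFun q x.1.1) x.1.2 x.2).submatrix finSumFinEquiv.symm
    finSumFinEquiv.symm)

theorem symOfFun_symBorder (x : ((SymIdx q → ℝ) × (Fin q → ℝ)) × ℝ) :
    symOfFun (q + 1) (symBorder x) =
      (bordered (symOfFun q x.1.1) x.1.2 x.2).submatrix finSumFinEquiv.symm
        finSumFinEquiv.symm := by
  refine symOfFun_symCoord (IsSymm.submatrix ?_ _)
  exact (isSymm_symOfFun _).fromBlocks (conjTranspose_eq_transpose_of_trivial _).symm rfl

/-- The position in a symmetric matrix of size `q + 1` of an entry of its upper left block, of its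
last column above the diagonal, and of its lower right corner. -/
def symBorderIdx : (SymIdx q ⊕ Fin q) ⊕ Unit → SymIdx (q + 1)
  | .inl (.inl p) => ⟨(p.1.1.castSucc, p.1.2.castSucc), Fin.castSucc_le_castSucc_iff.mpr p.2⟩
  | .inl (.inr i) => ⟨(i.castSucc, Fin.last q), Fin.le_last _⟩
  | .inr _ => ⟨(Fin.last q, Fin.last q), le_rfl⟩

theorem bijective_symBorderIdx : Function.Bijective (symBorderIdx (q := q)) := by
  constructor
  · rintro ((⟨⟨i, j⟩, hij⟩ | i) | _) ((⟨⟨k, l⟩, hkl⟩ | k) | _) h <;>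
      simp_all [symBorderIdx, Fin.ext_iff] <;> omega
  · rintro ⟨⟨i, j⟩, hij⟩
    induction i using Fin.lastCases with
    | last =>
      obtain rfl : j = Fin.last q := le_antisymm (Fin.le_last _) hij
      exact ⟨.inr (), rfl⟩
    | cast i =>
      induction j using Fin.lastCases with
      | last => exact ⟨.inl (.inr i), rfl⟩
      | cast j => exact ⟨.inl (.inl ⟨(i, j), hij⟩), rfl⟩

theorem symBorder_symBorderIdx (x : ((SymIdx q → ℝ) × (Fin q → ℝ)) × ℝ)
    (k : (SymIdx q ⊕ Fin q) ⊕ Unit) :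
    symBorder x (symBorderIdx k) = Sum.elim (Sum.elim x.1.1 x.1.2) (fun _ ↦ x.2) k := by
  rcases k with (p | i) | _ <;>
    simp [symBorder, symCoord_apply, symBorderIdx, bordered, symOfFun_apply]

theorem measurePreserving_symBorder :
    MeasurePreserving (symBorder : ((SymIdx q → ℝ) × (Fin q → ℝ)) × ℝ → _) := by
  let e := Equiv.ofBijective _ (bijective_symBorderIdx (q := q))
  have hsplit := (volume_measurePreserving_piCongrLeft (fun _ ↦ ℝ) e).comp <|
    (volume_measurePreserving_sumPiEquivProdPi_symm
      fun _ : (SymIdx q ⊕ Fin q) ⊕ Unit ↦ ℝ).comp <|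
    (volume_measurePreserving_sumPiEquivProdPi_symm fun _ : SymIdx q ⊕ Fin q ↦ ℝ).prod
      (volume_preserving_funUnique Unit ℝ).symm
  refine (congrArg (MeasurePreserving · volume volume) (funext₂ fun x p ↦ ?_)).mpr hsplit
  obtain ⟨k, rfl⟩ := e.surjective p
  rw [Function.comp_apply, MeasurableEquiv.coe_piCongrLeft, Equiv.piCongrLeft_apply_apply]
  refine (symBorder_symBorderIdx x k).trans ?_
  rcases k with (p | i) | _ <;> rfl

theorem measurable_invForm_symOfFun :
    Measurable fun y : (SymIdx q → ℝ) × (Fin q → ℝ) ↦ invForm (symOfFun q y.1) y.2 := by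
  have hcont : Continuous fun y : (SymIdx q → ℝ) × (Fin q → ℝ) ↦ symOfFun q y.1 :=
    isClosedEmbedding_symOfFun.continuous.comp continuous_fst
  have hadj : Continuous fun y : (SymIdx q → ℝ) × (Fin q → ℝ) ↦
      y.2 ⬝ᵥ (symOfFun q y.1).adjugate *ᵥ y.2 :=
    continuous_snd.dotProduct (hcont.matrix_adjugate.matrix_mulVec continuous_snd)
  simp only [invForm, Matrix.inv_def, Ring.inverse_eq_inv', smul_mulVec, dotProduct_smul,
    smul_eq_mul]
  exact hcont.matrix_det.measurable.inv.mul hadj.measurable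

theorem measurePreserving_symBorder_add_invForm :
    MeasurePreserving fun x : ((SymIdx q → ℝ) × (Fin q → ℝ)) × ℝ ↦
      symBorder (x.1, x.2 + invForm (symOfFun q x.1.1) x.1.2) := by
  refine measurePreserving_symBorder.comp ?_
  refine MeasurePreserving.skew_product
    (g := fun (y : (SymIdx q → ℝ) × (Fin q → ℝ)) t ↦ t + invForm (symOfFun q y.1) y.2)
    (MeasurePreserving.id _) ?_ ?_
  · exact measurable_snd.add (measurable_invForm_symOfFun.comp measurable_fst)
  · exact .of_forall fun y ↦ map_add_right_eq_self _ _

variable {s : ℂ}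

theorem gammaDensity_symBorder_add_invForm (x : ((SymIdx q → ℝ) × (Fin q → ℝ)) × ℝ) :
    gammaDensity s (symOfFun (q + 1)
      (symBorder (x.1, x.2 + invForm (symOfFun q x.1.1) x.1.2))) =
      gammaDensity s (symOfFun q x.1.1) * (Real.exp (-invForm (symOfFun q x.1.1) x.1.2) : ℂ) *
        (Set.Ioi 0).indicator (fun t : ℝ ↦ (Real.exp (-t) : ℂ) * (t : ℂ) ^ s) x.2 := by
  rw [symOfFun_symBorder, gammaDensity_submatrix_equiv, gammaDensity_bordered]

end SymBorder

section Gindikin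

variable {q} {s : ℂ}

theorem integrable_indicator_exp_neg_mul_cpow (hs : -1 < s.re) :
    Integrable ((Set.Ioi 0).indicator fun t : ℝ ↦ (Real.exp (-t) : ℂ) * (t : ℂ) ^ s) := by
  rw [integrable_indicator_iff measurableSet_Ioi]
  simpa using GammaIntegral_convergent (s := s + 1) (by simpa using neg_lt_iff_pos_add.mp hs)

theorem integral_indicator_exp_neg_mul_cpow (hs : -1 < s.re) :
    ∫ t, (Set.Ioi 0).indicator (fun t : ℝ ↦ (Real.exp (-t) : ℂ) * (t : ℂ) ^ s) t =
      Gamma (s + 1) := by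
  rw [integral_indicator measurableSet_Ioi,
    Gamma_eq_integral (by simpa using neg_lt_iff_pos_add.mp hs), GammaIntegral]
  simp

theorem integrable_gammaDensity_mul_exp_neg_invForm
    (hint : Integrable fun f ↦ gammaDensity (s + 1 / 2) (symOfFun q f)) :
    Integrable fun y : (SymIdx q → ℝ) × (Fin q → ℝ) ↦
      gammaDensity s (symOfFun q y.1) * (Real.exp (-invForm (symOfFun q y.1) y.2) : ℂ) := by
  have hmeas : Measurable fun y : (SymIdx q → ℝ) × (Fin q → ℝ) ↦
      gammaDensity s (symOfFun q y.1) * (Real.exp (-invForm (symOfFun q y.1) y.2) : ℂ) := by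
    have hsym := isClosedEmbedding_symOfFun (q := q).continuous.measurable
    have hinv := measurable_invForm_symOfFun (q := q)
    have hgamma := measurable_gammaDensity (n := Fin q) (s := s)
    fun_prop
  refine (integrable_prod_iff hmeas.aestronglyMeasurable).mpr ⟨.of_forall fun f ↦ ?_, ?_⟩
  · by_cases hA : (symOfFun q f).PosDef
    · exact (integrable_exp_neg_invForm hA).const_mul (gammaDensity s (symOfFun q f))
    · simp [gammaDensity_of_not_posDef hA]
  · refine (hint.const_mul (√Real.pi ^ Fintype.card (Fin q) : ℂ)).norm.congr (.of_forall fun f ↦ ?_)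
    simp only [← gammaDensity_mul_integral_exp_neg_invForm, norm_mul, norm_real, Real.norm_eq_abs,
      Real.abs_exp, integral_const_mul]
    rw [abs_of_nonneg (integral_nonneg fun _ ↦ (Real.exp_pos _).le)]

theorem integral_gammaDensity_mul_exp_neg_invForm
    (hint : Integrable fun f ↦ gammaDensity (s + 1 / 2) (symOfFun q f)) :
    ∫ y : (SymIdx q → ℝ) × (Fin q → ℝ),
        gammaDensity s (symOfFun q y.1) * (Real.exp (-invForm (symOfFun q y.1) y.2) : ℂ) =
      √Real.pi ^ q * ∫ f, gammaDensity (s + 1 / 2) (symOfFun q f) := by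
  rw [Measure.volume_eq_prod, integral_prod _ (integrable_gammaDensity_mul_exp_neg_invForm hint)]
  simp only [integral_const_mul, integral_complex_ofReal, gammaDensity_mul_integral_exp_neg_invForm,
    Fintype.card_fin]

theorem integrable_gammaDensity_succ (hs : -1 < s.re)
    (hint : Integrable fun f ↦ gammaDensity (s + 1 / 2) (symOfFun q f)) :
    Integrable fun f ↦ gammaDensity s (symOfFun (q + 1) f) := by
  have hmeas : Measurable fun f ↦ gammaDensity s (symOfFun (q + 1) f) :=
    measurable_gammaDensity.comp isClosedEmbedding_symOfFun.continuous.measurable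
  rw [← measurePreserving_symBorder_add_invForm.integrable_comp hmeas.aestronglyMeasurable]
  simp only [Function.comp_def, gammaDensity_symBorder_add_invForm]
  exact (integrable_gammaDensity_mul_exp_neg_invForm hint).mul_prod
    (integrable_indicator_exp_neg_mul_cpow hs)

theorem integral_gammaDensity_succ (hs : -1 < s.re)
    (hint : Integrable fun f ↦ gammaDensity (s + 1 / 2) (symOfFun q f)) :
    ∫ f, gammaDensity s (symOfFun (q + 1) f) =
      √Real.pi ^ q * (∫ f, gammaDensity (s + 1 / 2) (symOfFun q f)) * Gamma (s + 1) := by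
  have hmeas : Measurable fun f ↦ gammaDensity s (symOfFun (q + 1) f) :=
    measurable_gammaDensity.comp isClosedEmbedding_symOfFun.continuous.measurable
  have hpres := measurePreserving_symBorder_add_invForm (q := q)
  rw [← hpres.map_eq, integral_map hpres.measurable.aemeasurable hmeas.aestronglyMeasurable]
  simp only [gammaDensity_symBorder_add_invForm]
  rw [Measure.volume_eq_prod, integral_prod_mul (fun y : (SymIdx q → ℝ) × (Fin q → ℝ) ↦
      gammaDensity s (symOfFun q y.1) * (Real.exp (-invForm (symOfFun q y.1) y.2) : ℂ)),
    integral_gammaDensity_mul_exp_neg_invForm hint, integral_indicator_exp_neg_mul_cpow hs]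

theorem gammaDensity_of_isEmpty {n : Type*} [Fintype n] [DecidableEq n] [IsEmpty n]
    (x : Matrix n n ℝ) : gammaDensity s x = 1 := by
  rw [Subsingleton.elim x 1, gammaDensity, posDefPow_of_posDef PosDef.one]
  simp

theorem integrable_gammaDensity (hs : -1 < s.re) :
    Integrable fun f ↦ gammaDensity s (symOfFun q f) := by
  induction q generalizing s with
  | zero =>
    simp only [gammaDensity_of_isEmpty]
    simp [volume_pi]
  | succ q ih => exact integrable_gammaDensity_succ hs (ih (by norm_num; linarith))

theorem integral_gammaDensity (hs : -1 < s.re) :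
    ∫ f, gammaDensity s (symOfFun q f) =
      √Real.pi ^ q.choose 2 * ∏ j ∈ Finset.range q, Gamma (s + 1 + j / 2) := by
  induction q generalizing s with
  | zero => simp [gammaDensity_of_isEmpty, volume_pi, Measure.real]
  | succ q ih =>
    have hs' : -1 < (s + 1 / 2).re := by norm_num; linarith
    have hshift (j : ℕ) : s + 1 / 2 + 1 + j / 2 = s + 1 + (j + 1 : ℕ) / 2 := by
      push_cast
      ring
    rw [integral_gammaDensity_succ hs (integrable_gammaDensity hs'), ih hs',
      Finset.prod_range_succ', Nat.choose_succ_succ', Nat.choose_one_right, pow_add]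
    simp only [hshift, Nat.cast_zero, zero_div, add_zero]
    ring

theorem integral_gammaDensity_ne_zero (hs : -1 < s.re) :
    ∫ f, gammaDensity s (symOfFun q f) ≠ 0 := by
  rw [integral_gammaDensity hs]
  refine mul_ne_zero (pow_ne_zero _ (ofReal_ne_zero.mpr (Real.sqrt_pos.mpr Real.pi_pos).ne'))
    (Finset.prod_ne_zero_iff.mpr fun j _ ↦ Gamma_ne_zero_of_re_pos ?_)
  have hre : (s + 1 + j / 2).re = s.re + 1 + j / 2 := by simp
  rw [hre]
  linarith [j.cast_nonneg (α := ℝ)]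

end Gindikin

section Beta

variable {q} {s t : ℂ}

theorem posDefPow_mul_posDefPow_symCongr {A : Matrix (Fin q) (Fin q) ℝ} (hA : IsUnit A)
    (f : SymIdx q → ℝ) :
    posDefPow s (symOfFun q (symCongr A f)) * posDefPow t (A * Aᵀ - symOfFun q (symCongr A f)) =
      posDefPow (s + t) (A * Aᵀ) *
        (posDefPow s (symOfFun q f) * posDefPow t (1 - symOfFun q f)) := by
  have hsub : A * Aᵀ - A * symOfFun q f * Aᵀ = A * (1 - symOfFun q f) * Aᵀ := by
    rw [Matrix.mul_sub, Matrix.sub_mul, Matrix.mul_one]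
  rw [symOfFun_symCongr, hsub, posDefPow_mul_mul_transpose hA, posDefPow_mul_mul_transpose hA,
    posDefPow_add]
  ring

theorem integral_posDefPow_mul_posDefPow_sub (x : Matrix (Fin q) (Fin q) ℝ) :
    ∫ f, posDefPow s (symOfFun q f) * posDefPow t (x - symOfFun q f) =
      posDefPow (s + t + (q + 1) / 2) x *
        ∫ f, posDefPow s (symOfFun q f) * posDefPow t (1 - symOfFun q f) := by
  by_cases hx : x.PosDef
  · obtain ⟨A, hA, rfl⟩ := exists_isUnit_eq_mul_transpose hx
    have hdet : A.det ≠ 0 := ((isUnit_iff_isUnit_det A).mp hA).ne_zero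
    have hdetCongr : LinearMap.det (symCongr A) ≠ 0 := by
      rw [det_symCongr]
      exact pow_ne_zero _ hdet
    have hpow : posDefPow (((q : ℂ) + 1) / 2) (A * Aᵀ) = ((|A.det| ^ (q + 1) : ℝ) : ℂ) := by
      exact_mod_cast posDefPow_natCast_div_two hA (q + 1)
    have hchange := integral_comp_linearMap volume hdetCongr fun f ↦
      posDefPow s (symOfFun q f) * posDefPow t (A * Aᵀ - symOfFun q f)
    simp only [posDefPow_mul_posDefPow_symCongr hA, integral_const_mul] at hchange
    rw [posDefPow_add (s := s + t), mul_right_comm, hchange, hpow, det_symCongr, abs_pow,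
      real_smul, mul_right_comm, ← ofReal_mul, inv_mul_cancel₀ (by positivity), ofReal_one, one_mul]
  · have hzero (f : SymIdx q → ℝ) :
        posDefPow s (symOfFun q f) * posDefPow t (x - symOfFun q f) = 0 :=
      posDefPow_mul_posDefPow_eq_zero (by rwa [add_sub_cancel])
    simp only [hzero, integral_zero, posDefPow_of_not_posDef hx, zero_mul]

theorem integral_gammaDensity_mul_gammaDensity_sub (x : Matrix (Fin q) (Fin q) ℝ) :
    ∫ f, gammaDensity s (symOfFun q f) * gammaDensity t (x - symOfFun q f) =
      gammaDensity (s + t + (q + 1) / 2) x *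
        ∫ f, posDefPow s (symOfFun q f) * posDefPow t (1 - symOfFun q f) := by
  have hexp (y : Matrix (Fin q) (Fin q) ℝ) : gammaDensity s y * gammaDensity t (x - y) =
      cexp (-(x.trace : ℂ)) * (posDefPow s y * posDefPow t (x - y)) := by
    rw [gammaDensity, gammaDensity, mul_mul_mul_comm, ← exp_add, trace_sub]
    congr 2
    push_cast
    ring
  simp only [hexp]
  rw [integral_const_mul, integral_posDefPow_mul_posDefPow_sub, gammaDensity, mul_assoc]

theorem integral_gammaDensity_mul_integral_gammaDensity (hs : -1 < s.re) (ht : -1 < t.re) :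
    (∫ f, gammaDensity s (symOfFun q f)) * ∫ f, gammaDensity t (symOfFun q f) =
      (∫ f, posDefPow s (symOfFun q f) * posDefPow t (1 - symOfFun q f)) *
        ∫ f, gammaDensity (s + t + (q + 1) / 2) (symOfFun q f) := by
  have hconv := integral_convolution (ContinuousLinearMap.mul ℝ ℂ)
    (integrable_gammaDensity (q := q) hs) (integrable_gammaDensity (q := q) ht)
  simp only [ContinuousLinearMap.mul_apply', convolution, symOfFun_sub,
    integral_gammaDensity_mul_gammaDensity_sub, integral_mul_const] at hconv
  rw [← hconv, mul_comm]

variable (z w : ℂ)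

theorem gammaOmega_eq_integral :
    GammaOmega q z = ∫ f, gammaDensity (z - (q + 1) / 2) (symOfFun q f) := by
  rw [GammaOmega, ← integral_indicator measurableSet_setOf_posDef, integral_symMeasure]
  simp only [Set.indicator_mul_right, gammaDensity, posDefPow]

theorem betaOmega_eq_integral : BetaOmega q z w =
    ∫ f, posDefPow (z - (q + 1) / 2) (symOfFun q f) *
      posDefPow (w - (q + 1) / 2) (1 - symOfFun q f) := by
  have hset : MeasurableSet {x : Matrix (Fin q) (Fin q) ℝ | x.PosDef ∧ (1 - x).PosDef} :=
    measurableSet_setOf_posDef.inter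
      ((continuous_const.sub continuous_id).measurable measurableSet_setOf_posDef)
  rw [BetaOmega, ← integral_indicator hset, integral_symMeasure]
  simp only [Set.ofPred_and, Set.inter_indicator_mul]
  rfl

end Beta

/-- For `Re z, Re w > (q-1)/2`, the beta function of the cone of positive definite real
symmetric matrices satisfies `B_Ω(z,w) = Γ_Ω(z)Γ_Ω(w)/Γ_Ω(z+w)`. -/
theorem stmt_6 (hq : 1 ≤ q) (z w : ℂ)
    (hz : z.re > ((q : ℝ) - 1) / 2) (hw : w.re > ((q : ℝ) - 1) / 2) :
    BetaOmega q z w = GammaOmega q z * GammaOmega q w / GammaOmega q (z + w) := by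
  have hq' : (1 : ℝ) ≤ q := by exact_mod_cast hq
  have hre (u : ℂ) (hu : u.re > ((q : ℝ) - 1) / 2) : -1 < (u - (q + 1) / 2).re := by
    have : (u - (q + 1) / 2).re = u.re - (q + 1) / 2 := by simp
    linarith
  have hzw : z + w - (q + 1) / 2 = z - (q + 1) / 2 + (w - (q + 1) / 2) + (q + 1) / 2 := by ring
  have hne : GammaOmega q (z + w) ≠ 0 := by
    rw [gammaOmega_eq_integral]
    exact integral_gammaDensity_ne_zero (hre _ (by rw [add_re]; linarith))
  rw [eq_div_iff hne, gammaOmega_eq_integral, gammaOmega_eq_integral, gammaOmega_eq_integral,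
    betaOmega_eq_integral, integral_gammaDensity_mul_integral_gammaDensity (hre z hz) (hre w hw),
    hzw]
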